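/- Let k be a natural number and let C be an s-extremal singly even self-dual [24k+12, 12k+6, 4k+2] code. Then both neighbors N₁(C) = C₀ ∪ C₁ and N₃(C) = C₀ ∪ C₃ of C are s-extremal singly even self-dual [24k+12, 12k+6, 4k+4] codes; that is, each has minimum weight 4k+4 and its shadow has minimum weight 4k+2. -/

import Mathlib

open Finset

/-- Hamming weight of a binary vector. -/
def wt {n : ℕ} (x : Fin n → ZMod 2) : ℕ := hammingNorm x

/-- The dual of a set of binary vectors with respect to the standard inner product. -/
def dualSet {n : ℕ} (C : Set (Fin n → ZMod 2)) : Set (Fin n → ZMod 2) :=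
  {x | ∀ y ∈ C, ∑ i, x i * y i = 0}

/-- A binary linear code is self-dual if it equals its dual code. -/
def IsSelfDual {n : ℕ} (C : Submodule (ZMod 2) (Fin n → ZMod 2)) : Prop :=
  (C : Set (Fin n → ZMod 2)) = dualSet (C : Set (Fin n → ZMod 2))

/-- A self-dual code is singly even if some codeword has weight not divisible by 4. -/
def IsSinglyEvenSelfDual {n : ℕ} (C : Submodule (ZMod 2) (Fin n → ZMod 2)) : Prop :=
  IsSelfDual C ∧ ∃ x ∈ C, ¬ (4 ∣ wt x)

/-- The doubly even subcode `C₀` of `C` (as a set): codewords of weight ≡ 0 (mod 4). -/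
def evenSub {n : ℕ} (C : Submodule (ZMod 2) (Fin n → ZMod 2)) : Set (Fin n → ZMod 2) :=
  {x | x ∈ C ∧ 4 ∣ wt x}

/-- The shadow `S = C₀^⊥ \ C` of a singly even self-dual code. -/
def shadow {n : ℕ} (C : Submodule (ZMod 2) (Fin n → ZMod 2)) : Set (Fin n → ZMod 2) :=
  dualSet (evenSub C) \ (C : Set (Fin n → ZMod 2))

/-- The minimum (nonzero) weight of a set of vectors. -/
noncomputable def minWtSet {n : ℕ} (S : Set (Fin n → ZMod 2)) : ℕ :=
  sInf {w | ∃ x ∈ S, x ≠ 0 ∧ wt x = w}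

/-- The minimum weight of a code. -/
noncomputable def minWt {n : ℕ} (C : Submodule (ZMod 2) (Fin n → ZMod 2)) : ℕ :=
  minWtSet (C : Set (Fin n → ZMod 2))

/-- A singly even self-dual code of length `n` is s-extremal if
`d(S) = n/2 + 4 - 2 d(C)`. -/
def IsSExtremal {n : ℕ} (C : Submodule (ZMod 2) (Fin n → ZMod 2)) : Prop :=
  IsSinglyEvenSelfDual C ∧
    (minWtSet (shadow C) : ℤ) = ((n / 2 : ℕ) : ℤ) + 4 - 2 * (minWt C : ℤ)

/-- Two codes are equivalent if one is obtained from the other by permuting coordinates. -/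
def CodeEquiv {n : ℕ} (C D : Submodule (ZMod 2) (Fin n → ZMod 2)) : Prop :=
  ∃ σ : Equiv.Perm (Fin n),
    Submodule.map (LinearMap.funLeft (ZMod 2) (ZMod 2) σ) C = D

/-- The neighbor `C₀ ∪ (t + C₀)` of `C` obtained from a shadow vector `t`:
the span of the doubly even subcode together with `t`. -/
def neighborCode {n : ℕ} (C : Submodule (ZMod 2) (Fin n → ZMod 2))
    (t : Fin n → ZMod 2) : Submodule (ZMod 2) (Fin n → ZMod 2) :=
  Submodule.span (ZMod 2) (evenSub C ∪ {t})

/-!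
Write `N` for the neighbor and `S` for its shadow, with `n = 2h`. By Poisson summation,
`W(z) = ∑ x ∈ S, (1 - z) ^ wt x * (1 + z) ^ (n - wt x)` is `#S` plus terms of order at least the
minimum weight of `N`. On the other hand `S` is closed under complements and its weights are
congruent to `h` modulo 4 and at least `h - 4p`, so, as in Gleason's theorem, `W` is
`(1 - z²) ^ h` times a polynomial of degree at most `p` in `Φ = -z² (1 + z²)² / (1 - z²)⁴`.

If the minimum weight of `N` exceeded `2p + 2`, then at `z² = -X` this would say that
`#S * (1 + X) ^ (-h)` agrees up to order `p + 2` with a polynomial of degree at most `p` in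
`φ = X (1 - X)² / (1 + X)⁴`. The derivative of such a polynomial divided by `φ ^ (p + 1)` has no
residue, whereas `(1 + X) ^ (-h - 1) / φ ^ (p + 1)` has a positive one, a contradiction.
Hence `N` has a nonzero word of weight at most `2p + 2`; for `N = C₀ ∪ C₁` and `p = 2k + 1` this
is `4k + 4`, and all other assertions follow by locating words in the cosets `C₀, C₁, C₂, C₃`.
-/

section Analytic

open PowerSeries

lemma coeff_X_mul_derivative {R : Type*} [CommRing R] (f : R⟦X⟧) (m : ℕ) :
    coeff m (X * d⁄dX R f) = m * coeff m f := by
  cases m with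
  | zero => simp
  | succ m => rw [coeff_succ_X_mul, coeff_derivative]; push_cast; ring

lemma X_pow_dvd_derivative {R : Type*} [CommRing R] {f : R⟦X⟧} {m : ℕ} (h : X ^ (m + 1) ∣ f) :
    X ^ m ∣ d⁄dX R f := by
  rw [X_pow_dvd_iff] at h ⊢
  intro j hj
  rw [coeff_derivative, h (j + 1) (by lia), zero_mul]

variable {k : Type*} [Field k]

lemma one_sub_X_pow_inv_eq_map {d : ℕ} (hd : d ≠ 0) :
    (1 - X ^ d : k⟦X⟧)⁻¹ =
      PowerSeries.map (Nat.castRingHom k) (PowerSeries.mk fun n ↦ if d ∣ n then 1 else 0) := by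
  have hexpand : PowerSeries.map (Nat.castRingHom k)
      (PowerSeries.mk fun n ↦ if d ∣ n then 1 else 0) = expand d hd (PowerSeries.mk 1) := by
    ext n
    simp [coeff_expand]
  rw [inv_eq_iff_mul_eq_one (by simp [hd]), hexpand, ← expand_X d hd, ← map_one (expand d hd),
    ← map_sub, ← map_mul, mk_one_mul_one_sub_eq_one]

lemma coeff_mk_one_mul_ne_zero {f : ℕ⟦X⟧} (hf : constantCoeff f ≠ 0) (j : ℕ) :
    coeff j (PowerSeries.mk 1 * f) ≠ 0 := by
  rw [coeff_mul]
  refine ((Nat.pos_of_ne_zero ?_).trans_le (single_le_sum (fun _ _ ↦ Nat.zero_le _)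
    (HasAntidiagonal.mem_antidiagonal (a := (j, 0)).mpr (add_zero j)))).ne'
  simpa using hf

lemma one_sub_X_sq_inv : (1 - X ^ 2 : k⟦X⟧)⁻¹ = (1 - X)⁻¹ * (1 + X)⁻¹ := by
  rw [← PowerSeries.mul_inv_rev]
  congr 1
  ring

lemma one_add_X_mul_inv : (1 + X : k⟦X⟧) * (1 + X)⁻¹ = 1 :=
  PowerSeries.mul_inv_cancel _ (by simp)

lemma one_sub_X_sq_mul_one_add_X_inv_pow_inv :
    ((1 - X) ^ 2 * (1 + X)⁻¹ ^ 4 : k⟦X⟧)⁻¹ = (1 - X)⁻¹ ^ 2 * (1 + X) ^ 4 := by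
  have hsub : (1 - X : k⟦X⟧) * (1 - X)⁻¹ = 1 := PowerSeries.mul_inv_cancel _ (by simp)
  rw [inv_eq_iff_mul_eq_one (by simp)]
  calc _ = ((1 - X : k⟦X⟧) * (1 - X)⁻¹) ^ 2 * ((1 + X) * (1 + X)⁻¹) ^ 4 := by ring
    _ = 1 := by rw [hsub, one_add_X_mul_inv, one_pow, one_pow, one_mul]

lemma mul_pow_mul_pow_of_mul_eq_one {R : Type*} [CommRing R] {a t : R} (hat : a * t = 1) (s : R)
    {h p u : ℕ} (hu : 6 * p + 5 = h + 1 + u) :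
    (s ^ 2 * a ^ 4) ^ (p + 1) * t ^ (h + 1) = s * (a ^ u * (s * t) ^ (2 * p + 1)) := by
  calc (s ^ 2 * a ^ 4) ^ (p + 1) * t ^ (h + 1)
      = (s ^ 2 * a ^ 4) ^ (p + 1) * t ^ (h + 1) * (a * t) ^ (2 * p + 1) := by
        rw [hat, one_pow, mul_one]
    _ = s ^ (2 * p + 2) * a ^ (6 * p + 5) * t ^ (h + 1) * t ^ (2 * p + 1) := by ring
    _ = s * (a ^ u * (s * t) ^ (2 * p + 1)) * (a * t) ^ (h + 1) := by rw [hu]; ring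
    _ = s * (a ^ u * (s * t) ^ (2 * p + 1)) := by rw [hat, one_pow, mul_one]

variable [CharZero k]

lemma coeff_one_add_X_pow_mul_inv_ne_zero (u s j : ℕ) :
    coeff j ((1 - X : k⟦X⟧)⁻¹ * ((1 + X) ^ u * (1 - X ^ 2)⁻¹ ^ s)) ≠ 0 := by
  have hmap : (1 - X : k⟦X⟧)⁻¹ * ((1 + X) ^ u * (1 - X ^ 2)⁻¹ ^ s) =
      PowerSeries.map (Nat.castRingHom k) (PowerSeries.mk 1 *
        ((1 + X) ^ u * PowerSeries.mk (fun n ↦ if 2 ∣ n then 1 else 0) ^ s)) := by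
    have hone := one_sub_X_pow_inv_eq_map (k := k) one_ne_zero
    simp only [pow_one, one_dvd, if_true] at hone
    simp only [hone, one_sub_X_pow_inv_eq_map (k := k) two_ne_zero, map_mul, map_pow, map_add,
      map_one, PowerSeries.map_X]
    rfl
  rw [hmap, coeff_map, eq_natCast, Nat.cast_ne_zero]
  exact coeff_mk_one_mul_ne_zero (by simp) j

lemma coeff_inv_pow_mul_one_add_X_inv_pow_ne_zero {h p : ℕ} (hp : h < 6 * p + 5) (j : ℕ) :
    coeff j (((1 - X) ^ 2 * (1 + X)⁻¹ ^ 4 : k⟦X⟧)⁻¹ ^ (p + 1) * (1 + X)⁻¹ ^ (h + 1)) ≠ 0 := by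
  obtain ⟨u, hu⟩ := Nat.exists_eq_add_of_le (Nat.succ_le_of_lt hp)
  rw [one_sub_X_sq_mul_one_add_X_inv_pow_inv, mul_pow_mul_pow_of_mul_eq_one one_add_X_mul_inv _ hu,
    ← one_sub_X_sq_inv]
  exact coeff_one_add_X_pow_mul_inv_ne_zero u (2 * p + 1) j

/-- With `φ = X * H` the claim is that `φ' / φ ^ (p + 1) = -(1 / p) * (φ ^ (-p))'` has no residue,
being a derivative. -/
lemma coeff_inv_pow_mul_derivative_X_mul {H : k⟦X⟧} (hH : constantCoeff H ≠ 0) {p : ℕ}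
    (hp : p ≠ 0) : coeff p (H⁻¹ ^ (p + 1) * d⁄dX k (X * H)) = 0 := by
  have hinv : H * H⁻¹ = 1 := PowerSeries.mul_inv_cancel H hH
  have hderiv : C (p : k) * (H⁻¹ ^ (p + 1) * d⁄dX k (X * H)) =
      C (p : k) * H⁻¹ ^ p - X * d⁄dX k (H⁻¹ ^ p) := by
    obtain ⟨q, rfl⟩ := Nat.exists_eq_succ_of_ne_zero hp
    rw [Derivation.leibniz, derivative_pow, derivative_inv', derivative_X]
    simp only [smul_eq_mul, map_natCast, Nat.succ_eq_add_one, Nat.add_sub_cancel]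
    linear_combination ((q + 1 : ℕ) : k⟦X⟧) * H⁻¹ ^ (q + 1) * hinv
  have hcoeff := congrArg (coeff p) hderiv
  rw [map_sub, coeff_C_mul, coeff_C_mul, coeff_X_mul_derivative, sub_self] at hcoeff
  exact (mul_eq_zero.mp hcoeff).resolve_left (Nat.cast_ne_zero.mpr hp)

lemma coeff_inv_pow_mul_derivative_aeval {H : k⟦X⟧} (hH : constantCoeff H ≠ 0)
    {P : Polynomial k} {p : ℕ} (hP : P.natDegree ≤ p) :
    coeff p (H⁻¹ ^ (p + 1) * d⁄dX k (Polynomial.aeval (X * H) P)) = 0 := by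
  have hmonomial (j : ℕ) (hj : j ≤ p) :
      coeff p (H⁻¹ ^ (p + 1) * d⁄dX k ((X * H) ^ j)) = 0 := by
    obtain _ | j := j
    · simp
    obtain ⟨q, rfl⟩ := Nat.exists_eq_add_of_lt hj
    have hcancel : (H * H⁻¹) ^ j = 1 := by rw [PowerSeries.mul_inv_cancel H hH, one_pow]
    have hshift : H⁻¹ ^ (j + q + 1 + 1) * d⁄dX k ((X * H) ^ (j + 1)) =
        C ((j + 1 : ℕ) : k) * (X ^ j * (H⁻¹ ^ (q + 1 + 1) * d⁄dX k (X * H))) := by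
      rw [derivative_pow, map_natCast, Nat.add_sub_cancel]
      linear_combination ((j + 1 : ℕ) : k⟦X⟧) * X ^ j * H⁻¹ ^ (q + 2) * d⁄dX k (X * H) * hcancel
    rw [hshift, coeff_C_mul, show j + q + 1 = (q + 1) + j by ring, coeff_X_pow_mul,
      coeff_inv_pow_mul_derivative_X_mul hH q.succ_ne_zero, mul_zero]
  rw [Polynomial.aeval_eq_sum_range' (Nat.lt_succ_of_le hP), map_sum, mul_sum, map_sum]
  refine sum_eq_zero fun j hj ↦ ?_
  rw [Derivation.map_smul, mul_smul_comm, map_smul,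
    hmonomial j (Nat.lt_succ_iff.mp (mem_range.mp hj)), smul_zero]

lemma eq_zero_of_X_pow_dvd_mul_aeval_sub_C {P : Polynomial k} {c : k} {h p : ℕ}
    (hP : P.natDegree ≤ p) (hh : h ≠ 0) (hp : h < 6 * p + 5)
    (hdvd : X ^ (p + 2) ∣
      (1 + X) ^ h * Polynomial.aeval (X * ((1 - X) ^ 2 * (1 + X)⁻¹ ^ 4)) P - C c) : c = 0 := by
  have hkernel := coeff_inv_pow_mul_one_add_X_inv_pow_ne_zero (k := k) hp p
  set H : k⟦X⟧ := (1 - X) ^ 2 * (1 + X)⁻¹ ^ 4 with hH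
  have hresidue := coeff_inv_pow_mul_derivative_aeval (H := H) (by simp [hH]) hP
  obtain ⟨E, hE, haeval⟩ : ∃ E, X ^ (p + 2) ∣ E ∧
      Polynomial.aeval (X * H) P = C c * (1 + X)⁻¹ ^ h + E := by
    refine ⟨_, hdvd.mul_left ((1 + X)⁻¹ ^ h), ?_⟩
    have hpow : (1 + X : k⟦X⟧)⁻¹ ^ h * (1 + X) ^ h = 1 := by
      rw [← mul_pow, mul_comm, one_add_X_mul_inv, one_pow]
    linear_combination -Polynomial.aeval (X * H) P * hpow
  have herror : coeff p (H⁻¹ ^ (p + 1) * d⁄dX k E) = 0 :=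
    X_pow_dvd_iff.mp ((X_pow_dvd_derivative hE).mul_left _) p p.lt_succ_self
  have hmain : H⁻¹ ^ (p + 1) * d⁄dX k (C c * (1 + X)⁻¹ ^ h) =
      C (-(c * h)) * (H⁻¹ ^ (p + 1) * (1 + X)⁻¹ ^ (h + 1)) := by
    obtain ⟨q, rfl⟩ := Nat.exists_eq_succ_of_ne_zero hh
    rw [Derivation.leibniz, derivative_pow, derivative_inv']
    simp only [smul_eq_mul, derivative_C, map_add, Derivation.map_one_eq_zero,
      derivative_X, Nat.succ_eq_add_one, Nat.add_sub_cancel, map_neg, map_mul, map_natCast]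
    ring
  rw [haeval, map_add, mul_add, map_add, herror, add_zero, hmain, coeff_C_mul] at hresidue
  simpa [hh] using (mul_eq_zero.mp hresidue).resolve_right hkernel

end Analytic

section BinaryVectors

variable {n : ℕ}

lemma zmod_two_eq_zero_or_one (a : ZMod 2) : a = 0 ∨ a = 1 := by decide +revert

lemma wt_eq_sum_val (x : Fin n → ZMod 2) : wt x = ∑ i, (x i).val := by
  have hval (a : ZMod 2) : a.val = if a ≠ 0 then 1 else 0 := by decide +revert
  simp only [wt, hammingNorm, card_filter, hval]

lemma wt_le (x : Fin n → ZMod 2) : wt x ≤ n :=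
  hammingNorm_le_card_fintype.trans_eq (Fintype.card_fin n)

lemma wt_add_one_add_wt (x : Fin n → ZMod 2) : wt (x + 1) + wt x = n := by
  have hval (a : ZMod 2) : (a + 1).val + a.val = 1 := by decide +revert
  simp [wt_eq_sum_val, ← sum_add_distrib, hval]

lemma wt_add_add_two_mul_wt_mul (x y : Fin n → ZMod 2) :
    wt (x + y) + 2 * wt (x * y) = wt x + wt y := by
  have hval (a b : ZMod 2) : (a + b).val + 2 * (a * b).val = a.val + b.val := by decide +revert
  simp only [wt_eq_sum_val, mul_sum, ← sum_add_distrib, Pi.add_apply, Pi.mul_apply, hval]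

lemma two_dvd_wt_mul_iff {x y : Fin n → ZMod 2} : 2 ∣ wt (x * y) ↔ x ⬝ᵥ y = 0 := by
  simp [← ZMod.natCast_eq_zero_iff, wt_eq_sum_val, dotProduct]

lemma dotProduct_self_eq (x : Fin n → ZMod 2) : x ⬝ᵥ x = x ⬝ᵥ 1 := by
  have hmul (a : ZMod 2) : a * a = a := by decide +revert
  simp only [dotProduct, hmul, Pi.one_apply, mul_one]

lemma two_dvd_wt_iff {x : Fin n → ZMod 2} : 2 ∣ wt x ↔ x ⬝ᵥ x = 0 := by
  rw [dotProduct_self_eq, ← two_dvd_wt_mul_iff, mul_one]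

lemma wt_one : wt (1 : Fin n → ZMod 2) = n := by
  simpa [wt] using wt_add_one_add_wt (0 : Fin n → ZMod 2)

lemma four_dvd_wt_add_iff {x y : Fin n → ZMod 2} (hx : 4 ∣ wt x) (hxy : x ⬝ᵥ y = 0) :
    4 ∣ wt (x + y) ↔ 4 ∣ wt y := by
  have hoverlap := two_dvd_wt_mul_iff.mpr hxy
  have hwt := wt_add_add_two_mul_wt_mul x y
  lia

lemma add_add_self (x y : Fin n → ZMod 2) : x + y + y = x := by
  rw [add_assoc, ZModModule.add_self, add_zero]

lemma dotProduct_eq_zero_of_mem_span {G : Set (Fin n → ZMod 2)} {x y : Fin n → ZMod 2}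
    (hG : ∀ c ∈ G, ∀ d ∈ G, c ⬝ᵥ d = 0) (hx : x ∈ Submodule.span (ZMod 2) G)
    (hy : y ∈ Submodule.span (ZMod 2) G) : x ⬝ᵥ y = 0 := by
  induction hx, hy using Submodule.span_induction₂ with
  | mem_mem c d hc hd => exact hG c hc d hd
  | zero_left => exact zero_dotProduct _
  | zero_right => exact dotProduct_zero _
  | add_left c d e _ _ _ hc hd => rw [add_dotProduct, hc, hd, add_zero]
  | add_right c d e _ _ _ hd he => rw [dotProduct_add, hd, he, add_zero]
  | smul_left a c d _ _ h => rw [smul_dotProduct, h, smul_zero]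
  | smul_right a c d _ _ h => rw [dotProduct_smul, h, smul_zero]

end BinaryVectors

section Character

/-- The nontrivial additive character `b ↦ (-1) ^ b` of `ZMod 2`, with values in `A`. -/
def signChar (A : Type*) [CommRing A] : AddChar (ZMod 2) A :=
  AddChar.zmodChar 2 neg_one_sq

variable {A : Type*} [CommRing A] {n : ℕ}

lemma signChar_apply (b : ZMod 2) : signChar A b = (-1) ^ b.val :=
  AddChar.zmodChar_apply _ b

lemma signChar_sum {ι : Type*} (s : Finset ι) (f : ι → ZMod 2) :
    signChar A (∑ i ∈ s, f i) = ∏ i ∈ s, signChar A (f i) :=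
  map_prod (signChar A).toMonoidHom (fun i ↦ Multiplicative.ofAdd (f i)) s

lemma prod_one_add_signChar_mul (x : Fin n → ZMod 2) (z : A) :
    ∏ i, (1 + signChar A (x i) * z) = (1 - z) ^ wt x * (1 + z) ^ (n - wt x) := by
  have hfactor (b : ZMod 2) : 1 + signChar A b * z = if b ≠ 0 then 1 - z else 1 + z := by
    obtain rfl | rfl := zmod_two_eq_zero_or_one b <;>
      simp [signChar_apply, ZMod.val_one, sub_eq_add_neg]
  have hcompl : #{i | ¬ x i ≠ 0} = n - wt x := by
    rw [filter_not, card_sdiff_of_subset (filter_subset _ _), card_univ, Fintype.card_fin]; rfl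
  simp only [hfactor, prod_ite, prod_const, hcompl]
  rfl

lemma one_sub_pow_mul_one_add_pow_eq_sum (x : Fin n → ZMod 2) (z : A) :
    (1 - z) ^ wt x * (1 + z) ^ (n - wt x) =
      ∑ c : Fin n → ZMod 2, signChar A (x ⬝ᵥ c) * z ^ wt c := by
  have hfactor (a : ZMod 2) :
      1 + signChar A a * z = ∑ b : ZMod 2, signChar A (a * b) * z ^ b.val := by
    rw [show (univ : Finset (ZMod 2)) = {0, 1} from rfl, sum_pair zero_ne_one]
    simp [ZMod.val_one]
  simp only [← prod_one_add_signChar_mul, hfactor, prod_univ_sum, Fintype.piFinset_univ,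
    prod_mul_distrib, prod_pow_eq_pow_sum, ← wt_eq_sum_val, dotProduct, signChar_sum]

lemma sum_signChar_dotProduct_eq_zero [IsDomain A] [CharZero A] {S : Finset (Fin n → ZMod 2)}
    {v c : Fin n → ZMod 2} (hS : ∀ x ∈ S, x + v ∈ S) (hvc : v ⬝ᵥ c ≠ 0) :
    ∑ x ∈ S, signChar A (x ⬝ᵥ c) = 0 := by
  have hone : v ⬝ᵥ c = 1 := (zmod_two_eq_zero_or_one _).resolve_left hvc
  have hshift : ∑ x ∈ S, signChar A (x ⬝ᵥ c) = ∑ x ∈ S, signChar A ((x + v) ⬝ᵥ c) :=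
    sum_bij' (fun x _ ↦ x + v) (fun x _ ↦ x + v) hS hS
      (fun x _ ↦ add_add_self x v) (fun x _ ↦ add_add_self x v) fun x _ ↦ by rw [add_add_self]
  simp only [add_dotProduct, hone, AddChar.map_add_eq_mul, ← sum_mul] at hshift
  simpa [signChar_apply, ZMod.val_one, self_eq_neg] using hshift

lemma pow_dvd_sum_one_sub_pow_mul_one_add_pow_sub_card [IsDomain A] [CharZero A]
    {S : Finset (Fin n → ZMod 2)} {N : Set (Fin n → ZMod 2)} (hS : ∀ v ∈ N, ∀ x ∈ S, x + v ∈ S)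
    {d : ℕ} (hd : ∀ c ≠ 0, (∀ v ∈ N, v ⬝ᵥ c = 0) → d ≤ wt c) (z : A) :
    z ^ d ∣ ∑ x ∈ S, (1 - z) ^ wt x * (1 + z) ^ (n - wt x) - #S := by
  have hsum : ∑ x ∈ S, (1 - z) ^ wt x * (1 + z) ^ (n - wt x) =
      ∑ c : Fin n → ZMod 2, (∑ x ∈ S, signChar A (x ⬝ᵥ c)) * z ^ wt c := by
    simp only [one_sub_pow_mul_one_add_pow_eq_sum, sum_mul]
    exact sum_comm
  have hzero : (∑ x ∈ S, signChar A (x ⬝ᵥ (0 : Fin n → ZMod 2))) *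
      z ^ wt (0 : Fin n → ZMod 2) = #S := by
    simp [wt]
  rw [hsum, ← add_sum_erase _ _ (mem_univ 0), hzero, add_sub_cancel_left]
  refine dvd_sum fun c hc ↦ ?_
  by_cases hperp : ∀ v ∈ N, v ⬝ᵥ c = 0
  · exact (pow_dvd_pow z (hd c (ne_of_mem_erase hc) hperp)).mul_left _
  · push Not at hperp
    obtain ⟨v, hv, hvc⟩ := hperp
    rw [sum_signChar_dotProduct_eq_zero (hS v hv) hvc, zero_mul]
    exact dvd_zero _

end Character

section Gleason

open Polynomial

lemma natDegree_dickson_one_one_le {R : Type*} [CommRing R] (m : ℕ) :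
    (dickson 1 (1 : R) m).natDegree ≤ m := by
  induction m using Nat.twoStepInduction with
  | zero =>
    rw [dickson_zero]
    compute_degree
  | one => simpa using natDegree_X_le
  | more m ih ih' =>
    rw [dickson_add_two, map_one, one_mul]
    refine (natDegree_sub_le _ _).trans (max_le ?_ (ih.trans (by lia)))
    exact natDegree_mul_le_of_le natDegree_X_le ih' |>.trans (by lia)

variable {A : Type*} [CommRing A]

lemma pow_add_pow_eq_pow_mul_aeval_dickson (R : Type*) [CommRing R] [Algebra R A] {a b q s : A}
    (hmul : a * b = q ^ 2) (hadd : a + b = q * s) (m : ℕ) :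
    a ^ m + b ^ m = q ^ m * aeval s (dickson 1 (1 : R) m) := by
  induction m using Nat.twoStepInduction with
  | zero =>
    rw [dickson_zero, map_sub, map_ofNat, map_natCast]
    norm_num
  | one => simpa using hadd
  | more m ih ih' =>
    simp only [dickson_add_two, map_one, one_mul, map_sub, map_mul, aeval_X]
    linear_combination (a + b) * ih' - a * b * ih +
      hadd * (q ^ (m + 1) * aeval s (dickson 1 (1 : R) (m + 1))) -
      hmul * (q ^ m * aeval s (dickson 1 (1 : R) m))

lemma exists_aeval_eq_one_sub_pow_mul_one_add_pow_add (R : Type*) [CommRing R] [Algebra R A]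
    {z Φ : A} (hΦ : Φ * (1 - z ^ 2) ^ 4 = -(z ^ 2 * (1 + z ^ 2) ^ 2)) (r m : ℕ) :
    ∃ P : R[X], P.natDegree ≤ m ∧
      (1 - z) ^ r * (1 + z) ^ (r + 8 * m) + (1 - z) ^ (r + 8 * m) * (1 + z) ^ r =
        (1 - z ^ 2) ^ (r + 4 * m) * aeval Φ P := by
  -- `(1 + z) ^ 8` and `(1 - z) ^ 8` have sum `(1 - z²)⁴ (2 - 64 Φ)` and product `(1 - z²)⁸`.
  refine ⟨(dickson 1 1 m).comp (2 - 64 * X), ?_, ?_⟩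
  · have hlinear : (2 - 64 * X : R[X]).natDegree ≤ 1 := by compute_degree
    exact natDegree_comp_le.trans
      ((Nat.mul_le_mul (natDegree_dickson_one_one_le m) hlinear).trans_eq (mul_one m))
  · have hpow := pow_add_pow_eq_pow_mul_aeval_dickson R (a := (1 + z) ^ 8) (b := (1 - z) ^ 8)
      (q := (1 - z ^ 2) ^ 4) (s := 2 - 64 * Φ) (by ring) (by linear_combination 64 * hΦ) m
    have hs : aeval Φ (2 - 64 * X : R[X]) = 2 - 64 * Φ := by
      rw [map_sub, map_mul, map_ofNat, map_ofNat, aeval_X]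
    rw [aeval_comp, hs]
    simp only [← pow_mul] at hpow
    have hsplit : (1 - z ^ 2) ^ r = (1 - z) ^ r * (1 + z) ^ r := by rw [← mul_pow]; ring
    linear_combination (1 - z ^ 2) ^ r * hpow - ((1 + z) ^ (8 * m) + (1 - z) ^ (8 * m)) * hsplit

lemma exists_aeval_eq_of_mod_four_eq (R : Type*) [CommRing R] [Algebra R A]
    {z Φ : A} (hΦ : Φ * (1 - z ^ 2) ^ 4 = -(z ^ 2 * (1 + z ^ 2) ^ 2)) {h w w' p : ℕ}
    (hsum : w + w' = 2 * h) (hmod : w % 4 = h % 4) (hw : h ≤ w + 4 * p) (hw' : h ≤ w' + 4 * p) :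
    ∃ P : R[X], P.natDegree ≤ p ∧
      (1 - z) ^ w * (1 + z) ^ w' + (1 - z) ^ w' * (1 + z) ^ w =
        (1 - z ^ 2) ^ h * aeval Φ P := by
  wlog hle : w ≤ w' generalizing w w'
  · obtain ⟨P, hP, heq⟩ := this (by lia) (by lia) hw' hw (by lia)
    exact ⟨P, hP, by rw [add_comm, heq]⟩
  obtain ⟨m, hm⟩ : 4 ∣ h - w := by lia
  obtain ⟨P, hP, heq⟩ := exists_aeval_eq_one_sub_pow_mul_one_add_pow_add R hΦ w m
  refine ⟨P, hP.trans (by lia), ?_⟩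
  rwa [show w' = w + 8 * m by lia, show h = w + 4 * m by lia]

variable {n : ℕ}

lemma exists_aeval_eq_two_mul_sum (R : Type*) [CommRing R] [Algebra R A] {z Φ : A}
    (hΦ : Φ * (1 - z ^ 2) ^ 4 = -(z ^ 2 * (1 + z ^ 2) ^ 2)) {h p : ℕ} (hn : n = 2 * h)
    {S : Finset (Fin n → ZMod 2)} (hS : ∀ x ∈ S, x + 1 ∈ S)
    (hmod : ∀ x ∈ S, wt x % 4 = h % 4) (hwt : ∀ x ∈ S, h ≤ wt x + 4 * p) :
    ∃ P : R[X], P.natDegree ≤ p ∧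
      2 * ∑ x ∈ S, (1 - z) ^ wt x * (1 + z) ^ (n - wt x) = (1 - z ^ 2) ^ h * aeval Φ P := by
  have hcompl (x : Fin n → ZMod 2) : wt (x + 1) = n - wt x := by
    have := wt_add_one_add_wt x
    lia
  choose! P hP heq using fun x hx ↦ exists_aeval_eq_of_mod_four_eq R hΦ
    (by have := wt_le x; lia : wt x + (n - wt x) = 2 * h) (hmod x hx) (hwt x hx)
    (hcompl x ▸ hwt _ (hS x hx))
  refine ⟨∑ x ∈ S, P x, natDegree_sum_le_of_forall_le S P hP, ?_⟩
  have hreflect : ∑ x ∈ S, (1 - z) ^ wt x * (1 + z) ^ (n - wt x) =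
      ∑ x ∈ S, (1 - z) ^ (n - wt x) * (1 + z) ^ wt x :=
    sum_bij' (fun x _ ↦ x + 1) (fun x _ ↦ x + 1) hS hS
      (fun x _ ↦ add_add_self x 1) (fun x _ ↦ add_add_self x 1) fun x _ ↦ by
        rw [hcompl, Nat.sub_sub_self (wt_le x)]
  rw [two_mul]
  nth_rw 2 [hreflect]
  rw [← sum_add_distrib, sum_congr rfl heq, ← mul_sum, map_sum]

end Gleason

section Bound

open PowerSeries

variable {n : ℕ}

lemma expand_two_mul_one_add_X_sq_pow (k : Type*) [Field k] :
    expand 2 two_ne_zero (X * ((1 - X) ^ 2 * (1 + X)⁻¹ ^ 4) : k⟦X⟧) * (1 + X ^ 2) ^ 4 =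
      X ^ 2 * (1 - X ^ 2) ^ 2 := by
  have hX : expand 2 two_ne_zero (X : k⟦X⟧) = X ^ 2 := expand_X 2 two_ne_zero
  calc _ = expand 2 two_ne_zero (X * (1 - X) ^ 2 * ((1 + X) * (1 + X)⁻¹) ^ 4 : k⟦X⟧) := by
        simp only [map_mul, map_pow, map_add, map_sub, map_one, hX]
        ring
    _ = _ := by simp [hX]

lemma X_pow_dvd_of_dvd_expand_two {k : Type*} [Field k] {f : k⟦X⟧} {m : ℕ}
    (h : X ^ (2 * m + 1) ∣ expand 2 two_ne_zero f) : X ^ (m + 1) ∣ f := by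
  rw [X_pow_dvd_iff] at h ⊢
  intro j hj
  rw [← coeff_expand_mul 2 two_ne_zero f j, h _ (by lia)]

theorem exists_ne_zero_wt_lt {h p : ℕ} (hn : n = 2 * h) (hh : h ≠ 0) (hp : h < 6 * p + 5)
    {S : Finset (Fin n → ZMod 2)} (hne : S.Nonempty)
    {N : Set (Fin n → ZMod 2)} (hN : 1 ∈ N) (hS : ∀ v ∈ N, ∀ x ∈ S, x + v ∈ S)
    (hmod : ∀ x ∈ S, wt x % 4 = h % 4) (hwt : ∀ x ∈ S, h ≤ wt x + 4 * p) :
    ∃ c ≠ 0, (∀ v ∈ N, v ⬝ᵥ c = 0) ∧ wt c < 2 * p + 3 := by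
  by_contra! hmin
  have : CharZero ℂ⟦X⟧ := charZero_of_injective_algebraMap C_injective
  set z : ℂ⟦X⟧ := C Complex.I * X
  have hz2 : z ^ 2 = -X ^ 2 := by
    rw [mul_pow, ← map_pow, Complex.I_sq, map_neg, map_one, neg_one_mul]
  set φ : ℂ⟦X⟧ := X * ((1 - X) ^ 2 * (1 + X)⁻¹ ^ 4)
  obtain ⟨P, hP, hsum⟩ := exists_aeval_eq_two_mul_sum ℂ (z := z) (Φ := expand 2 two_ne_zero φ)
    (by rw [hz2]; linear_combination expand_two_mul_one_add_X_sq_pow ℂ) hn (hS 1 hN) hmod hwt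
  have hpoisson : X ^ (2 * p + 3) ∣
      ∑ x ∈ S, (1 - z) ^ wt x * (1 + z) ^ (n - wt x) - (#S : ℂ⟦X⟧) :=
    (pow_dvd_pow_of_dvd (dvd_mul_left X _) _).trans
      (pow_dvd_sum_one_sub_pow_mul_one_add_pow_sub_card hS hmin z)
  have hexpand : expand 2 two_ne_zero ((1 + X) ^ h * Polynomial.aeval φ P - C (2 * #S : ℂ)) =
      2 * (∑ x ∈ S, (1 - z) ^ wt x * (1 + z) ^ (n - wt x) - (#S : ℂ⟦X⟧)) := by
    rw [mul_sub, hsum, hz2, map_sub, map_mul, map_pow, map_add, map_one, expand_X,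
      Polynomial.aeval_algHom_apply, sub_neg_eq_add, map_mul C, map_ofNat C, map_natCast C,
      map_mul, map_ofNat, map_natCast]
  have hzero := eq_zero_of_X_pow_dvd_mul_aeval_sub_C hP hh hp
    (X_pow_dvd_of_dvd_expand_two (hexpand ▸ hpoisson.mul_left 2))
  simp [hne.ne_empty] at hzero

end Bound

section Codes

variable {n : ℕ} {C : Submodule (ZMod 2) (Fin n → ZMod 2)} {t x y : Fin n → ZMod 2}

lemma ne_zero_of_mem_shadow (hx : x ∈ shadow C) : x ≠ 0 :=
  fun h ↦ hx.2 (h ▸ C.zero_mem)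

namespace IsSelfDual

lemma mem_iff (hC : IsSelfDual C) : x ∈ C ↔ ∀ y ∈ C, x ⬝ᵥ y = 0 :=
  Set.ext_iff.mp hC x

lemma dotProduct_eq_zero (hC : IsSelfDual C) (hx : x ∈ C) (hy : y ∈ C) : x ⬝ᵥ y = 0 :=
  hC.mem_iff.mp hx y hy

lemma two_dvd_wt (hC : IsSelfDual C) (hx : x ∈ C) : 2 ∣ wt x :=
  two_dvd_wt_iff.mpr (hC.dotProduct_eq_zero hx hx)

lemma one_mem (hC : IsSelfDual C) : 1 ∈ C := by
  refine hC.mem_iff.mpr fun y hy ↦ ?_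
  rw [dotProduct_comm, ← dotProduct_self_eq, hC.dotProduct_eq_zero hy hy]

lemma two_mul_finrank (hC : IsSelfDual C) : 2 * Module.finrank (ZMod 2) C = n := by
  let B : LinearMap.BilinForm (ZMod 2) (Fin n → ZMod 2) := dotProductBilin (ZMod 2) (ZMod 2)
  have hrefl : B.IsRefl := fun x y hxy ↦ (dotProduct_comm y x).trans hxy
  have hnondeg : B.Nondegenerate :=
    (LinearMap.IsRefl.nondegenerate_iff_separatingLeft hrefl).mpr _root_.dotProduct_eq_zero
  have hortho : B.orthogonal C = C := by
    ext x
    rw [LinearMap.BilinForm.mem_orthogonal_iff, hC.mem_iff]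
    exact forall₂_congr fun y _ ↦ dotProduct_comm x y ▸ Iff.rfl
  have hrank := LinearMap.BilinForm.finrank_orthogonal hnondeg C
  have hle := Submodule.finrank_le C
  rw [Module.finrank_fin_fun] at hrank hle
  rw [hortho] at hrank
  lia

lemma four_dvd_wt_add (hC : IsSelfDual C) (hx : x ∈ C) (hy : y ∈ C) (hx4 : ¬ 4 ∣ wt x)
    (hy4 : ¬ 4 ∣ wt y) : 4 ∣ wt (x + y) := by
  have hoverlap := two_dvd_wt_mul_iff.mpr (hC.dotProduct_eq_zero hx hy)
  have hwt := wt_add_add_two_mul_wt_mul x y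
  have hx2 := hC.two_dvd_wt hx
  have hy2 := hC.two_dvd_wt hy
  lia

lemma add_mem_evenSub (hC : IsSelfDual C) (hx : x ∈ evenSub C) (hy : y ∈ evenSub C) :
    x + y ∈ evenSub C :=
  ⟨C.add_mem hx.1 hy.1, (four_dvd_wt_add_iff hx.2 (hC.dotProduct_eq_zero hx.1 hy.1)).mpr hy.2⟩

lemma mem_span_evenSub_iff (hC : IsSelfDual C) :
    x ∈ Submodule.span (ZMod 2) (evenSub C) ↔ x ∈ evenSub C := by
  have hzero : (0 : Fin n → ZMod 2) ∈ evenSub C := ⟨C.zero_mem, by simp [wt]⟩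
  refine ⟨fun hx ↦ ?_, fun hx ↦ Submodule.subset_span hx⟩
  induction hx using Submodule.span_induction with
  | mem _ hx => exact hx
  | zero => exact hzero
  | add x y _ _ hx hy => exact hC.add_mem_evenSub hx hy
  | smul a x _ hx =>
    obtain rfl | rfl := zmod_two_eq_zero_or_one a
    · rwa [zero_smul]
    · rwa [one_smul]

lemma mem_neighborCode_iff (hC : IsSelfDual C) :
    x ∈ neighborCode C t ↔ x ∈ evenSub C ∨ x + t ∈ evenSub C := by
  rw [neighborCode, Set.union_singleton, Submodule.mem_span_insert']
  simp only [hC.mem_span_evenSub_iff]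
  constructor
  · rintro ⟨a, ha⟩
    obtain rfl | rfl := zmod_two_eq_zero_or_one a
    · exact .inl (by rwa [zero_smul, add_zero] at ha)
    · exact .inr (by rwa [one_smul] at ha)
  · rintro (hx | hx)
    · exact ⟨0, by rwa [zero_smul, add_zero]⟩
    · exact ⟨1, by rwa [one_smul]⟩

lemma dotProduct_eq_zero_iff_of_mem_shadow (hC : IsSelfDual C) (hx : x ∈ shadow C)
    (hy : y ∈ C) : x ⬝ᵥ y = 0 ↔ 4 ∣ wt y := by
  refine ⟨fun hxy ↦ ?_, fun hy4 ↦ hx.1 y ⟨hy, hy4⟩⟩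
  by_contra hy4
  refine hx.2 (hC.mem_iff.mpr fun c hc ↦ ?_)
  by_cases hc4 : 4 ∣ wt c
  · exact hx.1 c ⟨hc, hc4⟩
  · have hadd : x ⬝ᵥ (c + y) = 0 := hx.1 _ ⟨C.add_mem hc hy, hC.four_dvd_wt_add hc hy hc4 hy4⟩
    rwa [dotProduct_add, hxy, add_zero] at hadd

lemma add_mem_shadow (hC : IsSelfDual C) (hx : x ∈ shadow C) (hy : y ∈ C) :
    x + y ∈ shadow C := by
  refine ⟨fun c hc ↦ ?_, fun hxy ↦ hx.2 ((C.add_mem_iff_left hy).mp hxy)⟩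
  change (x + y) ⬝ᵥ c = 0
  rw [add_dotProduct, hC.dotProduct_eq_zero hy hc.1, add_zero]
  exact hx.1 c hc

lemma add_mem_of_mem_shadow (hC : IsSelfDual C) (hx : x ∈ shadow C)
    (hy : y ∈ shadow C) : x + y ∈ C := by
  refine hC.mem_iff.mpr fun c hc ↦ ?_
  have hiff : x ⬝ᵥ c = 0 ↔ y ⬝ᵥ c = 0 := by
    rw [hC.dotProduct_eq_zero_iff_of_mem_shadow hx hc,
      hC.dotProduct_eq_zero_iff_of_mem_shadow hy hc]
  have hsum (a b : ZMod 2) (hab : a = 0 ↔ b = 0) : a + b = 0 := by decide +revert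
  rw [add_dotProduct, hsum _ _ hiff]

lemma wt_mod_four_eq_of_mem_shadow (hC : IsSelfDual C) (hx : x ∈ shadow C)
    (hy : y ∈ shadow C) : wt x % 4 = wt y % 4 := by
  have hsum := hC.add_mem_of_mem_shadow hx hy
  have hparity := hC.dotProduct_eq_zero_iff_of_mem_shadow hx hsum
  have heven := hC.two_dvd_wt hsum
  have hwt := wt_add_add_two_mul_wt_mul x (x + y)
  rw [← add_assoc, ZModModule.add_self, zero_add] at hwt
  rw [← two_dvd_wt_mul_iff] at hparity
  lia

theorem exists_wt_le (hC : IsSelfDual C) {h p : ℕ} (hn : n = 2 * h) (hh : h ≠ 0)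
    (hp : h < 6 * p + 5) (hne : (shadow C).Nonempty)
    (hmod : ∀ x ∈ shadow C, wt x % 4 = h % 4)
    (hwt : ∀ x ∈ shadow C, h ≤ wt x + 4 * p) : ∃ c ∈ C, c ≠ 0 ∧ wt c ≤ 2 * p + 2 := by
  obtain ⟨S, hS⟩ := (shadow C).toFinite.exists_finset_coe
  simp only [← hS, mem_coe, coe_nonempty] at hmod hwt hne
  have hstable : ∀ v ∈ C, ∀ x ∈ S, x + v ∈ S := by
    simpa only [← mem_coe, hS] using fun v hv x hx ↦ hC.add_mem_shadow hx hv
  obtain ⟨c, hc, hperp, hlt⟩ := exists_ne_zero_wt_lt hn hh hp hne hC.one_mem hstable hmod hwt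
  exact ⟨c, hC.mem_iff.mpr fun y hy ↦ dotProduct_comm c y ▸ hperp y hy, hc, Nat.lt_succ_iff.mp hlt⟩

lemma dotProduct_self_of_mem_shadow (hC : IsSelfDual C) (hn : 4 ∣ n) (ht : t ∈ shadow C) :
    t ⬝ᵥ t = 0 := by
  rw [dotProduct_self_eq, hC.dotProduct_eq_zero_iff_of_mem_shadow ht hC.one_mem, wt_one]
  exact hn

lemma neighborCode_isSelfDual (hC : IsSelfDual C) (hn : 4 ∣ n) (ht : t ∈ shadow C) :
    IsSelfDual (neighborCode C t) := by
  have htt := hC.dotProduct_self_of_mem_shadow hn ht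
  refine Set.Subset.antisymm (fun x hx ↦ ?_) (fun x hx ↦ ?_)
  · refine fun y hy ↦ dotProduct_eq_zero_of_mem_span ?_ hx hy
    rintro c (hc | rfl) d (hd | rfl)
    · exact hC.dotProduct_eq_zero hc.1 hd.1
    · exact (dotProduct_comm c _).trans (ht.1 c hc)
    · exact ht.1 d hd
    · exact htt
  · have hxeven : x ∈ dualSet (evenSub C) := fun y hy ↦ hx y (hC.mem_neighborCode_iff.mpr (.inl hy))
    have htx : t ⬝ᵥ x = 0 := dotProduct_comm t x ▸ hx t (Submodule.subset_span (.inr rfl))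
    refine hC.mem_neighborCode_iff.mpr ?_
    by_cases hxC : x ∈ C
    · exact .inl ⟨hxC, (hC.dotProduct_eq_zero_iff_of_mem_shadow ht hxC).mp htx⟩
    · have hxt := hC.add_mem_of_mem_shadow ⟨hxeven, hxC⟩ ht
      refine .inr ⟨hxt, (hC.dotProduct_eq_zero_iff_of_mem_shadow ht hxt).mp ?_⟩
      rw [dotProduct_add, htx, htt, add_zero]

lemma mem_evenSub_or_mem_shadow_of_mem_neighborCode (hC : IsSelfDual C)
    (ht : t ∈ shadow C) (hx : x ∈ neighborCode C t) :
    x ∈ evenSub C ∨ x ∈ shadow C := by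
  refine (hC.mem_neighborCode_iff.mp hx).imp_right fun hxt ↦ ?_
  have := hC.add_mem_shadow ht hxt.1
  rwa [add_comm, add_add_self] at this

lemma evenSub_neighborCode (hC : IsSelfDual C) (ht : t ∈ shadow C) (ht4 : ¬ 4 ∣ wt t) :
    evenSub (neighborCode C t) = evenSub C := by
  refine Set.Subset.antisymm (fun x hx ↦ ?_)
    fun x hx ↦ ⟨hC.mem_neighborCode_iff.mpr (.inl hx), hx.2⟩
  refine (hC.mem_neighborCode_iff.mp hx.1).resolve_right fun hxt ↦ ht4 ?_
  have hperp : (x + t) ⬝ᵥ t = 0 := dotProduct_comm (x + t) t ▸ ht.1 _ hxt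
  rw [← four_dvd_wt_add_iff hxt.2 hperp, add_add_self]
  exact hx.2

lemma mem_shadow_neighborCode (hC : IsSelfDual C) (ht : t ∈ shadow C) (ht4 : ¬ 4 ∣ wt t)
    (hx : x ∈ C) (hx4 : ¬ 4 ∣ wt x) : x ∈ shadow (neighborCode C t) := by
  rw [_root_.shadow, hC.evenSub_neighborCode ht ht4]
  refine ⟨fun y hy ↦ hC.dotProduct_eq_zero hx hy.1, fun hxN ↦ ?_⟩
  rcases hC.mem_evenSub_or_mem_shadow_of_mem_neighborCode ht hxN with hx' | hx'
  · exact hx4 hx'.2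
  · exact hx'.2 hx

lemma mem_or_mem_shadow_of_mem_shadow_neighborCode (hC : IsSelfDual C)
    (ht : t ∈ shadow C) (ht4 : ¬ 4 ∣ wt t) (hx : x ∈ shadow (neighborCode C t)) :
    (x ∈ C ∧ ¬ 4 ∣ wt x) ∨ x ∈ shadow C := by
  rw [_root_.shadow, hC.evenSub_neighborCode ht ht4] at hx
  by_cases hxC : x ∈ C
  · exact .inl ⟨hxC, fun hx4 ↦ hx.2 (hC.mem_neighborCode_iff.mpr (.inl ⟨hxC, hx4⟩))⟩
  · exact .inr ⟨hx.1, hxC⟩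

lemma le_wt_of_mem_neighborCode (hC : IsSelfDual C) (ht : t ∈ shadow C) {d : ℕ}
    (heven : ∀ c ∈ evenSub C, c ≠ 0 → d ≤ wt c) (hshadow : ∀ s ∈ shadow C, d ≤ wt s)
    (hx : x ∈ neighborCode C t) (hx0 : x ≠ 0) : d ≤ wt x :=
  (hC.mem_evenSub_or_mem_shadow_of_mem_neighborCode ht hx).elim (heven x · hx0) (hshadow x)

lemma le_wt_of_mem_shadow_neighborCode (hC : IsSelfDual C) (ht : t ∈ shadow C)
    (ht4 : ¬ 4 ∣ wt t) {d : ℕ} (hcode : ∀ c ∈ C, c ≠ 0 → d ≤ wt c)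
    (hshadow : ∀ s ∈ shadow C, d ≤ wt s) (hx : x ∈ shadow (neighborCode C t)) :
    d ≤ wt x :=
  (hC.mem_or_mem_shadow_of_mem_shadow_neighborCode ht ht4 hx).elim
    (fun hxC ↦ hcode x hxC.1 (ne_zero_of_mem_shadow hx)) (hshadow x)

lemma wt_mod_four_of_mem_shadow_neighborCode (hC : IsSelfDual C) (ht : t ∈ shadow C)
    (ht2 : wt t % 4 = 2) (hx : x ∈ shadow (neighborCode C t)) : wt x % 4 = 2 := by
  rcases hC.mem_or_mem_shadow_of_mem_shadow_neighborCode ht (by lia) hx with ⟨hxC, hx4⟩ | hxS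
  · have heven := hC.two_dvd_wt hxC
    lia
  · exact (hC.wt_mod_four_eq_of_mem_shadow hxS ht).trans ht2

end IsSelfDual

end Codes

section MinimumWeight

variable {n : ℕ} {S : Set (Fin n → ZMod 2)} {x : Fin n → ZMod 2}

lemma minWtSet_le (hx : x ∈ S) (hx0 : x ≠ 0) : minWtSet S ≤ wt x :=
  Nat.sInf_le ⟨x, hx, hx0, rfl⟩

lemma exists_wt_eq_minWtSet (hS : minWtSet S ≠ 0) : ∃ x ∈ S, x ≠ 0 ∧ wt x = minWtSet S :=
  Nat.sInf_mem (Nat.nonempty_of_pos_sInf (Nat.pos_of_ne_zero hS))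

lemma minWtSet_eq {d : ℕ} (hx : x ∈ S) (hx0 : x ≠ 0) (hle : wt x ≤ d)
    (hd : ∀ y ∈ S, y ≠ 0 → d ≤ wt y) : minWtSet S = d := by
  refine ((minWtSet_le hx hx0).trans hle).antisymm (le_csInf ⟨_, x, hx, hx0, rfl⟩ ?_)
  rintro _ ⟨y, hy, hy0, rfl⟩
  exact hd y hy hy0

end MinimumWeight

/-- Proposition 2.1(iii): the neighbors `N₁(C) = C₀ ∪ C₁` and `N₃(C) = C₀ ∪ C₃` of an
s-extremal singly even self-dual `[24k+12, 12k+6, 4k+2]` code are s-extremal (and extremal)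
singly even self-dual `[24k+12, 12k+6, 4k+4]` codes. -/
theorem sExtremal_neighbor_24k12 (k : ℕ)
    (C : Submodule (ZMod 2) (Fin (24 * k + 12) → ZMod 2))
    (hse : IsSinglyEvenSelfDual C)
    (hdim : Module.finrank (ZMod 2) C = 12 * k + 6)
    (hd : minWt C = 4 * k + 2)
    (hshadow : minWtSet (shadow C) = 4 * k + 6)
    (t : Fin (24 * k + 12) → ZMod 2) (ht : t ∈ shadow C) :
    IsSinglyEvenSelfDual (neighborCode C t) ∧
    Module.finrank (ZMod 2) (neighborCode C t) = 12 * k + 6 ∧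
    minWt (neighborCode C t) = 4 * k + 4 ∧
    minWtSet (shadow (neighborCode C t)) = 4 * k + 2 := by
  have hC := hse.1
  have hleC : ∀ c ∈ C, c ≠ 0 → 4 * k + 2 ≤ wt c := fun c hc hc0 ↦ hd ▸ minWtSet_le hc hc0
  have hleS : ∀ s ∈ shadow C, 4 * k + 6 ≤ wt s := fun s hs ↦
    hshadow ▸ minWtSet_le hs (ne_zero_of_mem_shadow hs)
  obtain ⟨c, hc, hc0, hcwt⟩ : ∃ c ∈ C, c ≠ 0 ∧ wt c = 4 * k + 2 :=
    hd ▸ exists_wt_eq_minWtSet (hd.trans_ne (by lia))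
  obtain ⟨s, hs, -, hswt⟩ := exists_wt_eq_minWtSet (hshadow.trans_ne (by lia))
  have ht2 : wt t % 4 = 2 := (hC.wt_mod_four_eq_of_mem_shadow ht hs).trans (by lia)
  have hN := hC.neighborCode_isSelfDual ⟨6 * k + 3, by ring⟩ ht
  have hcN := hC.mem_shadow_neighborCode ht (by lia) hc (by lia)
  have hNmod := fun x ↦ hC.wt_mod_four_of_mem_shadow_neighborCode (x := x) ht ht2
  have hNle := fun x ↦ hC.le_wt_of_mem_shadow_neighborCode (x := x) ht (by lia) hleC
    fun s hs ↦ (hleS s hs).trans' (by lia)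
  obtain ⟨b, hb, hb0, hbwt⟩ := hN.exists_wt_le (h := 12 * k + 6) (p := 2 * k + 1) (by ring)
    (by lia) (by lia) ⟨c, hcN⟩ (fun x hx ↦ (hNmod x hx).trans (by lia))
    fun x hx ↦ by linarith [hNle x hx]
  refine ⟨⟨hN, t, Submodule.subset_span (.inr rfl), by lia⟩, by linarith [hN.two_mul_finrank],
    minWtSet_eq hb hb0 (by lia) fun x ↦ hC.le_wt_of_mem_neighborCode ht ?_ ?_,
    minWtSet_eq hcN hc0 hcwt.le fun x hx _ ↦ hNle x hx⟩
  · exact fun e he he0 ↦ by have := hleC e he.1 he0; have := he.2; lia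
  · exact fun s hs ↦ (hleS s hs).trans' (by lia)
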